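/- (Law of large numbers for open quantum random walks.) Assume (H1): L admits a unique invariant state ρ_∞, and set m = Σ_{i=1}^{2d} Tr(A_i ρ_∞ A_i^*) e_i ∈ ℝ^d. Let (ρ_n, X_n)_{n≥0} be the quantum trajectory process of the open quantum random walk. Then X_n/n converges to m almost surely. -/

import Mathlib

open MeasureTheory Filter Matrix Finset
open scoped ComplexOrder

noncomputable section

/-- The direction vectors `e_1, …, e_{2d}` in `ℤ^d`, with `e_{d+j} = -e_j`. -/
def dir (d : ℕ) (i : Fin (2 * d)) : Fin d → ℤ :=
  fun j => if (i : ℕ) < d then (if (j : ℕ) = (i : ℕ) then 1 else 0)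
           else (if (j : ℕ) = (i : ℕ) - d then -1 else 0)

/-- The direction vectors viewed in `ℝ^d`. -/
def dirR (d : ℕ) (i : Fin (2 * d)) : Fin d → ℝ := fun j => (dir d i j : ℝ)

instance {k : ℕ} : MeasurableSpace (Matrix (Fin k) (Fin k) ℂ) := MeasurableSpace.pi

/-- A density matrix: positive semidefinite with trace one. -/
def IsDensity {k : ℕ} (ρ : Matrix (Fin k) (Fin k) ℂ) : Prop := ρ.PosSemidef ∧ ρ.trace = 1

/-- The quantum trajectory process of the open quantum random walk. -/
structure IsQTraj {k d : ℕ} {Ω : Type} {mΩ : MeasurableSpace Ω}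
    (A : Fin (2 * d) → Matrix (Fin k) (Fin k) ℂ)
    (μ : Measure Ω) (ℱ : Filtration ℕ mΩ)
    (ρ : ℕ → Ω → Matrix (Fin k) (Fin k) ℂ)
    (X : ℕ → Ω → Fin d → ℤ) : Prop where
  density : ∀ n, ∀ᵐ ω ∂μ, IsDensity (ρ n ω)
  adapted_ρ : ∀ n, Measurable[ℱ n] (ρ n)
  adapted_X : ∀ n, Measurable[ℱ n] (X n)
  prob : ∀ (n : ℕ) (j : Fin (2 * d)),
    μ[(fun ω => if X (n + 1) ω = X n ω + dir d j then (1 : ℝ) else 0) | ℱ n]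
      =ᵐ[μ] fun ω => ((A j * ρ n ω * (A j)ᴴ).trace).re
  update : ∀ (n : ℕ) (j : Fin (2 * d)), ∀ᵐ ω ∂μ,
    X (n + 1) ω = X n ω + dir d j →
      ρ (n + 1) ω = ((A j * ρ n ω * (A j)ᴴ).trace)⁻¹ • (A j * ρ n ω * (A j)ᴴ)

/-- The drift vector `m = Σ_{i=1}^{2d} Tr(A_i ρ_∞ A_i^*) e_i ∈ ℝ^d`. -/
def mvec {k d : ℕ} (A : Fin (2 * d) → Matrix (Fin k) (Fin k) ℂ)
    (ρinf : Matrix (Fin k) (Fin k) ℂ) : Fin d → ℝ :=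
  fun j => ∑ i, ((A i * ρinf * (A i)ᴴ).trace).re * dirR d i j

/-!
Given `ℱ n`, the displacement `X (n + 1) - X n` has conditional mean `mvec A (ρ n)` and the state
`ρ (n + 1)` has conditional mean `L (ρ n)`. Both sequences are bounded, so by the strong law for
martingale differences (the `L²` martingale convergence theorem and Kronecker's lemma) the errors
`X (n + 1) - X n - mvec A (ρ n)` and `ρ (n + 1) - L (ρ n)` have Cesàro means tending to `0`.

For the states, `ρ (n + 1) - ρ n` telescopes, so the Cesàro means `σ n` of `ρ` satisfy
`L (σ n) - σ n → 0`. They lie in the compact convex set of density matrices and each of their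
cluster points is invariant, so `σ n → ρinf` by uniqueness. As `mvec A` is linear, the displacements
then average to `mvec A ρinf`.
-/

section CesaroMean

variable {E F : Type*} [AddCommGroup E] [Module ℝ E] [AddCommGroup F] [Module ℝ F]

/-- The Cesàro mean `(x 0 + ⋯ + x (n - 1)) / n` of a sequence; it is `0` for `n = 0`. -/
def cesaroMean (x : ℕ → E) (n : ℕ) : E := (n : ℝ)⁻¹ • ∑ i ∈ range n, x i

lemma cesaroMean_sub (x y : ℕ → E) (n : ℕ) :
    cesaroMean (fun i ↦ x i - y i) n = cesaroMean x n - cesaroMean y n := by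
  rw [cesaroMean, sum_sub_distrib, smul_sub, cesaroMean, cesaroMean]

lemma map_cesaroMean (T : E →ₗ[ℝ] F) (x : ℕ → E) (n : ℕ) :
    T (cesaroMean x n) = cesaroMean (fun i ↦ T (x i)) n := by
  rw [cesaroMean, map_smul, map_sum, cesaroMean]

lemma cesaroMean_succ_sub (x : ℕ → E) (n : ℕ) :
    cesaroMean (fun i ↦ x (i + 1) - x i) n = (n : ℝ)⁻¹ • (x n - x 0) := by
  rw [cesaroMean, sum_range_sub]

lemma cesaroMean_mem_of_convex {s : Set E} (hs : Convex ℝ s) {x : ℕ → E} (hx : ∀ i, x i ∈ s)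
    {n : ℕ} (hn : n ≠ 0) : cesaroMean x n ∈ s := by
  rw [cesaroMean, smul_sum]
  refine hs.sum_mem (fun _ _ ↦ by positivity) ?_ fun i _ ↦ hx i
  simp [hn]

lemma tendsto_map_cesaroMean_sub [TopologicalSpace E] [ContinuousSub E] (T : E →ₗ[ℝ] E)
    {x : ℕ → E} (hx : Tendsto (fun n : ℕ ↦ (n : ℝ)⁻¹ • (x n - x 0)) atTop (nhds 0))
    (hT : Tendsto (cesaroMean fun i ↦ x (i + 1) - T (x i)) atTop (nhds 0)) :
    Tendsto (fun n ↦ T (cesaroMean x n) - cesaroMean x n) atTop (nhds 0) := by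
  have hdiff := hx.sub hT
  rw [sub_zero] at hdiff
  refine hdiff.congr fun n ↦ ?_
  simp_rw [← cesaroMean_succ_sub, map_cesaroMean, ← cesaroMean_sub, sub_sub_sub_cancel_left]

end CesaroMean

section Kronecker

variable {E : Type*} [NormedAddCommGroup E] [NormedSpace ℝ E]

lemma sum_range_eq_smul_sum_inv_smul_sub (x : ℕ → E) (n : ℕ) :
    ∑ k ∈ range n, x k = (n : ℝ) • ∑ k ∈ range n, ((k : ℝ) + 1)⁻¹ • x k -
      ∑ m ∈ range n, ∑ k ∈ range m, ((k : ℝ) + 1)⁻¹ • x k := by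
  induction n with
  | zero => simp
  | succ n ih =>
    have hx : ((n : ℝ) + 1) • ((n : ℝ) + 1)⁻¹ • x n = x n := smul_inv_smul₀ (by positivity) _
    rw [sum_range_succ x, sum_range_succ _ n, sum_range_succ _ n, Nat.cast_succ, smul_add, hx, ih,
      add_smul, one_smul]
    abel

/-- Kronecker's lemma, via summation by parts. -/
lemma tendsto_cesaroMean_zero_of_tendsto_sum_inv_smul {x : ℕ → E} {c : E}
    (h : Tendsto (fun n ↦ ∑ k ∈ range n, ((k : ℝ) + 1)⁻¹ • x k) atTop (nhds c)) :
    Tendsto (cesaroMean x) atTop (nhds 0) := by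
  have hdiff := h.sub h.cesaro_smul
  rw [sub_self] at hdiff
  refine hdiff.congr' ?_
  filter_upwards [eventually_ne_atTop 0] with n hn
  rw [cesaroMean, sum_range_eq_smul_sum_inv_smul_sub x n, smul_sub,
    inv_smul_smul₀ (Nat.cast_ne_zero.2 hn)]

lemma tendsto_inv_smul_zero_of_norm_le {x : ℕ → E} {C : ℝ} (hx : ∀ n, ‖x n‖ ≤ C) :
    Tendsto (fun n : ℕ ↦ (n : ℝ)⁻¹ • x n) atTop (nhds 0) :=
  tendsto_inv_atTop_nhds_zero_nat.zero_smul_isBoundedUnder_le (isBoundedUnder_of ⟨C, hx⟩)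

end Kronecker

section MartingaleDifference

variable {Ω E F : Type*} {mΩ : MeasurableSpace Ω} {μ : Measure Ω} {ℱ : Filtration ℕ mΩ}
  [NormedAddCommGroup E] [NormedSpace ℝ E] [NormedAddCommGroup F] [NormedSpace ℝ F]

/-- A martingale difference sequence. The difference `D n` is revealed at time `n + 1`, so that
`∑ k ∈ range n, D k` is adapted to `ℱ`. -/
structure IsMartingaleDifference (D : ℕ → Ω → E) (ℱ : Filtration ℕ mΩ) (μ : Measure Ω) :
    Prop where
  stronglyMeasurable (n : ℕ) : StronglyMeasurable[ℱ (n + 1)] (D n)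
  integrable (n : ℕ) : Integrable (D n) μ
  condExp_eq_zero (n : ℕ) : μ[D n | ℱ n] =ᵐ[μ] 0

lemma isMartingaleDifference_sub_condExp [CompleteSpace E] [IsFiniteMeasure μ] {Y : ℕ → Ω → E}
    (hY : ∀ n, StronglyMeasurable[ℱ (n + 1)] (Y n)) (hint : ∀ n, Integrable (Y n) μ) :
    IsMartingaleDifference (fun n ↦ Y n - μ[Y n | ℱ n]) ℱ μ where
  stronglyMeasurable n := (hY n).sub (stronglyMeasurable_condExp.mono (ℱ.mono n.le_succ))
  integrable n := (hint n).sub integrable_condExp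
  condExp_eq_zero n := by
    refine (condExp_sub (hint n) integrable_condExp _).trans ?_
    rw [condExp_of_stronglyMeasurable (ℱ.le n) stronglyMeasurable_condExp integrable_condExp,
      sub_self]

namespace IsMartingaleDifference

lemma smul [CompleteSpace E] {D : ℕ → Ω → E} (hD : IsMartingaleDifference D ℱ μ) (c : ℕ → ℝ) :
    IsMartingaleDifference (fun n ↦ c n • D n) ℱ μ where
  stronglyMeasurable n := (hD.stronglyMeasurable n).const_smul (c n)
  integrable n := (hD.integrable n).smul (c n)
  condExp_eq_zero n := by
    filter_upwards [condExp_smul (c n) (D n) (ℱ n), hD.condExp_eq_zero n] with ω hsmul hzero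
    rw [hsmul, Pi.smul_apply, hzero, Pi.zero_apply, smul_zero]

lemma clm_comp [CompleteSpace E] [CompleteSpace F] {D : ℕ → Ω → E}
    (hD : IsMartingaleDifference D ℱ μ) (T : E →L[ℝ] F) :
    IsMartingaleDifference (fun n ↦ T ∘ D n) ℱ μ where
  stronglyMeasurable n := T.continuous.comp_stronglyMeasurable (hD.stronglyMeasurable n)
  integrable n := T.integrable_comp (hD.integrable n)
  condExp_eq_zero n := by
    filter_upwards [T.comp_condExp_comm (hD.integrable n) (m := ℱ n), hD.condExp_eq_zero n]
      with ω hcomm hzero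
    rw [← hcomm, Function.comp_apply, hzero, Pi.zero_apply, map_zero,
      Pi.zero_apply]

lemma stronglyAdapted_sum {D : ℕ → Ω → E} (hD : IsMartingaleDifference D ℱ μ) :
    StronglyAdapted ℱ (fun n ↦ ∑ k ∈ range n, D k) := fun _ ↦
  Finset.stronglyMeasurable_sum _ fun k hk ↦
    (hD.stronglyMeasurable k).mono (ℱ.mono (mem_range.1 hk))

lemma martingale_sum [CompleteSpace E] [IsFiniteMeasure μ] {D : ℕ → Ω → E}
    (hD : IsMartingaleDifference D ℱ μ) :
    Martingale (fun n ↦ ∑ k ∈ range n, D k) ℱ μ := by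
  refine martingale_of_condExp_sub_eq_zero_nat hD.stronglyAdapted_sum
    (fun n ↦ integrable_finsetSum' _ fun k _ ↦ hD.integrable k) fun n ↦ ?_
  rw [sum_range_succ_sub_sum]
  exact hD.condExp_eq_zero n

section Real

variable {D : ℕ → Ω → ℝ}

lemma integral_sum_mul_eq_zero [IsFiniteMeasure μ] (hD : IsMartingaleDifference D ℱ μ)
    (hL2 : ∀ n, MemLp (D n) 2 μ) (n : ℕ) : ∫ ω, (∑ k ∈ range n, D k) ω * D n ω ∂μ = 0 := by
  have hint : Integrable ((∑ k ∈ range n, D k) * D n) μ :=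
    (memLp_finsetSum' _ fun k _ ↦ hL2 k).integrable_mul (hL2 n)
  calc ∫ ω, ((∑ k ∈ range n, D k) * D n) ω ∂μ
      = ∫ ω, μ[(∑ k ∈ range n, D k) * D n | ℱ n] ω ∂μ := (integral_condExp (ℱ.le n)).symm
    _ = ∫ _, 0 ∂μ := by
        refine integral_congr_ae ?_
        filter_upwards [condExp_mul_of_stronglyMeasurable_left (hD.stronglyAdapted_sum n) hint
          (hD.integrable n), hD.condExp_eq_zero n] with ω hpull hzero
        rw [hpull, Pi.mul_apply, hzero, Pi.zero_apply, mul_zero]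
    _ = 0 := integral_zero _ _

lemma integral_sum_sq [IsFiniteMeasure μ] (hD : IsMartingaleDifference D ℱ μ)
    (hL2 : ∀ n, MemLp (D n) 2 μ) (n : ℕ) :
    ∫ ω, (∑ k ∈ range n, D k) ω ^ 2 ∂μ = ∑ k ∈ range n, ∫ ω, D k ω ^ 2 ∂μ := by
  induction n with
  | zero => simp
  | succ n ih =>
    have hS : MemLp (∑ k ∈ range n, D k) 2 μ := memLp_finsetSum' _ fun k _ ↦ hL2 k
    have hcross : Integrable (fun ω ↦ 2 * ((∑ k ∈ range n, D k) ω * D n ω)) μ :=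
      (hS.integrable_mul (hL2 n)).const_mul 2
    have hsq_cross : Integrable (fun ω ↦ (∑ k ∈ range n, D k) ω ^ 2 +
        2 * ((∑ k ∈ range n, D k) ω * D n ω)) μ := hS.integrable_sq.add hcross
    calc ∫ ω, (∑ k ∈ range (n + 1), D k) ω ^ 2 ∂μ
        = ∫ ω, ((∑ k ∈ range n, D k) ω ^ 2 + 2 * ((∑ k ∈ range n, D k) ω * D n ω)) +
            D n ω ^ 2 ∂μ := by
          refine integral_congr_ae (ae_of_all _ fun ω ↦ ?_)
          simp only [sum_range_succ, Pi.add_apply]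
          ring
      _ = ∑ k ∈ range (n + 1), ∫ ω, D k ω ^ 2 ∂μ := by
          rw [integral_add hsq_cross (hL2 n).integrable_sq,
            integral_add hS.integrable_sq hcross, integral_const_mul,
            hD.integral_sum_mul_eq_zero hL2, mul_zero, add_zero, ih, sum_range_succ]

end Real

end IsMartingaleDifference

lemma eLpNorm_one_le_of_integral_sq_le [IsFiniteMeasure μ] {f : Ω → ℝ} (hf : MemLp f 2 μ) {B : ℝ}
    (hB : ∫ ω, f ω ^ 2 ∂μ ≤ B) : eLpNorm f 1 μ ≤ ENNReal.ofReal (μ.real Set.univ + B) := by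
  have hint : Integrable f μ := hf.integrable one_le_two
  rw [eLpNorm_one_eq_lintegral_enorm, ← ofReal_integral_norm_eq_lintegral_enorm hint]
  refine ENNReal.ofReal_le_ofReal ?_
  calc ∫ ω, ‖f ω‖ ∂μ ≤ ∫ ω, 1 + f ω ^ 2 ∂μ := by
        refine integral_mono hint.norm ((integrable_const _).add hf.integrable_sq) fun ω ↦ ?_
        rw [Real.norm_eq_abs, ← sq_abs (f ω)]
        nlinarith [sq_nonneg (|f ω| - 1)]
    _ = μ.real Set.univ + ∫ ω, f ω ^ 2 ∂μ := by
        rw [integral_add (integrable_const _) hf.integrable_sq, integral_const, smul_eq_mul,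
          mul_one]
    _ ≤ μ.real Set.univ + B := by gcongr

namespace IsMartingaleDifference

theorem ae_exists_tendsto_sum [IsFiniteMeasure μ] {D : ℕ → Ω → ℝ}
    (hD : IsMartingaleDifference D ℱ μ) (hL2 : ∀ n, MemLp (D n) 2 μ)
    (hsum : Summable fun n ↦ ∫ ω, D n ω ^ 2 ∂μ) :
    ∀ᵐ ω ∂μ, ∃ c, Tendsto (fun n ↦ ∑ k ∈ range n, D k ω) atTop (nhds c) := by
  have hbound (n : ℕ) : ∫ ω, (∑ k ∈ range n, D k) ω ^ 2 ∂μ ≤ ∑' k, ∫ ω, D k ω ^ 2 ∂μ := by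
    rw [hD.integral_sum_sq hL2]
    exact hsum.sum_le_tsum _ fun k _ ↦ integral_nonneg fun ω ↦ sq_nonneg _
  simpa only [Finset.sum_apply] using hD.martingale_sum.submartingale.exists_ae_tendsto_of_bdd
    fun n ↦ eLpNorm_one_le_of_integral_sq_le (memLp_finsetSum' _ fun k _ ↦ hL2 k) (hbound n)

theorem ae_tendsto_cesaroMean_real [IsFiniteMeasure μ] {D : ℕ → Ω → ℝ}
    (hD : IsMartingaleDifference D ℱ μ) (hL2 : ∀ n, MemLp (D n) 2 μ)
    (hsum : Summable fun n : ℕ ↦ ((n : ℝ) + 1)⁻¹ ^ 2 * ∫ ω, D n ω ^ 2 ∂μ) :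
    ∀ᵐ ω ∂μ, Tendsto (cesaroMean fun n ↦ D n ω) atTop (nhds 0) := by
  have hweighted := (hD.smul fun n ↦ ((n : ℝ) + 1)⁻¹).ae_exists_tendsto_sum
    (fun n ↦ (hL2 n).const_smul _)
    (by simpa only [Pi.smul_apply, smul_eq_mul, mul_pow, integral_const_mul] using hsum)
  filter_upwards [hweighted] with ω ⟨c, hc⟩
  exact tendsto_cesaroMean_zero_of_tendsto_sum_inv_smul hc

theorem ae_tendsto_clm_cesaroMean [CompleteSpace E] [IsFiniteMeasure μ] {D : ℕ → Ω → E}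
    (hD : IsMartingaleDifference D ℱ μ) (hL2 : ∀ n, MemLp (D n) 2 μ)
    (hsum : Summable fun n : ℕ ↦ ((n : ℝ) + 1)⁻¹ ^ 2 * ∫ ω, ‖D n ω‖ ^ 2 ∂μ) (T : E →L[ℝ] ℝ) :
    ∀ᵐ ω ∂μ, Tendsto (fun n ↦ T (cesaroMean (fun k ↦ D k ω) n)) atTop (nhds 0) := by
  have hTL2 (n : ℕ) : MemLp (T ∘ D n) 2 μ := T.comp_memLp' (hL2 n)
  have hTsq (n : ℕ) : ∫ ω, (T ∘ D n) ω ^ 2 ∂μ ≤ ‖T‖ ^ 2 * ∫ ω, ‖D n ω‖ ^ 2 ∂μ := by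
    rw [← integral_const_mul]
    refine integral_mono (hTL2 n).integrable_sq ((hL2 n).norm.integrable_sq.const_mul _)
      fun ω ↦ ?_
    simpa only [Function.comp_apply, Real.norm_eq_abs, sq_abs, mul_pow] using
      pow_le_pow_left₀ (norm_nonneg _) (T.le_opNorm (D n ω)) 2
  have hTsum : Summable fun n : ℕ ↦ ((n : ℝ) + 1)⁻¹ ^ 2 * ∫ ω, (T ∘ D n) ω ^ 2 ∂μ := by
    refine (hsum.mul_left (‖T‖ ^ 2)).of_nonneg_of_le
      (fun n ↦ mul_nonneg (by positivity) (integral_nonneg fun ω ↦ sq_nonneg _)) fun n ↦ ?_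
    rw [mul_left_comm]
    exact mul_le_mul_of_nonneg_left (hTsq n) (by positivity)
  filter_upwards [(hD.clm_comp T).ae_tendsto_cesaroMean_real hTL2 hTsum] with ω hω
  exact hω.congr fun n ↦ (map_cesaroMean T.toLinearMap _ n).symm

theorem ae_tendsto_cesaroMean [FiniteDimensional ℝ E] [IsFiniteMeasure μ] {D : ℕ → Ω → E}
    (hD : IsMartingaleDifference D ℱ μ) (hL2 : ∀ n, MemLp (D n) 2 μ)
    (hsum : Summable fun n : ℕ ↦ ((n : ℝ) + 1)⁻¹ ^ 2 * ∫ ω, ‖D n ω‖ ^ 2 ∂μ) :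
    ∀ᵐ ω ∂μ, Tendsto (cesaroMean fun n ↦ D n ω) atTop (nhds 0) := by
  have := FiniteDimensional.complete ℝ E
  let coords : E ≃L[ℝ] (Fin (Module.finrank ℝ E) → ℝ) :=
    (Module.finBasis ℝ E).equivFun.toContinuousLinearEquiv
  filter_upwards [ae_all_iff.2 fun i ↦ hD.ae_tendsto_clm_cesaroMean hL2 hsum
    ((ContinuousLinearMap.proj i).comp coords.toContinuousLinearMap)] with ω hω
  rw [coords.toHomeomorph.isInducing.tendsto_nhds_iff, tendsto_pi_nhds]
  exact fun i ↦ by simpa using hω i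

end IsMartingaleDifference

theorem ae_tendsto_cesaroMean_sub_condExp_of_norm_le [FiniteDimensional ℝ E] [IsFiniteMeasure μ]
    {Y : ℕ → Ω → E} {C : ℝ} (hY : ∀ n, StronglyMeasurable[ℱ (n + 1)] (Y n))
    (hC : ∀ n, ∀ᵐ ω ∂μ, ‖Y n ω‖ ≤ C) :
    ∀ᵐ ω ∂μ, Tendsto (cesaroMean fun n ↦ Y n ω - μ[Y n | ℱ n] ω) atTop (nhds 0) := by
  have := FiniteDimensional.complete ℝ E
  have hint (n : ℕ) : Integrable (Y n) μ :=
    .of_bound ((hY n).mono (ℱ.le _)).aestronglyMeasurable C (hC n)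
  have hD := isMartingaleDifference_sub_condExp hY hint
  have hbound (n : ℕ) : ∀ᵐ ω ∂μ, ‖Y n ω - μ[Y n | ℱ n] ω‖ ≤ C + C := by
    filter_upwards [hC n, ae_bdd_norm_condExp_of_ae_bdd_norm (m := ℱ n) (hC n)] with ω hYω hEω
    exact norm_sub_le_of_le hYω hEω
  have hL2 (n : ℕ) : MemLp (Y n - μ[Y n | ℱ n]) 2 μ := .of_bound (hD.integrable n).1 _ (hbound n)
  refine hD.ae_tendsto_cesaroMean hL2 ?_
  have hsummable : Summable fun n : ℕ ↦ ((n : ℝ) + 1)⁻¹ ^ 2 := by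
    simpa using (summable_nat_add_iff 1).2 (Real.summable_nat_pow_inv.2 one_lt_two)
  refine (hsummable.mul_right ((C + C) ^ 2 * μ.real Set.univ)).of_nonneg_of_le
    (fun n ↦ mul_nonneg (by positivity) (integral_nonneg fun ω ↦ sq_nonneg _)) fun n ↦ ?_
  gcongr
  calc ∫ ω, ‖(Y n - μ[Y n | ℱ n]) ω‖ ^ 2 ∂μ ≤ ∫ _, (C + C) ^ 2 ∂μ := by
        refine integral_mono_ae (hL2 n).norm.integrable_sq (integrable_const _) ?_
        filter_upwards [hbound n] with ω hω
        exact pow_le_pow_left₀ (norm_nonneg _) hω 2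
    _ = (C + C) ^ 2 * μ.real Set.univ := by rw [integral_const, smul_eq_mul, mul_comm]

end MartingaleDifference

lemma tendsto_nhds_of_isCompact_of_unique_fixedPoint {α G : Type*} [AddGroup G]
    [TopologicalSpace G] [ContinuousSub G] [T2Space G] {l : Filter α} {u : α → G}
    {K : Set G} {f : G → G} {x : G} (hK : IsCompact K) (hu : ∀ᶠ a in l, u a ∈ K)
    (hf : Continuous f) (hfu : Tendsto (fun a ↦ f (u a) - u a) l (nhds 0))
    (hx : ∀ y ∈ K, f y = y → y = x) : Tendsto u l (nhds x) := by
  refine hK.tendsto_nhds_of_unique_mapClusterPt hu fun y hyK hy ↦ hx y hyK ?_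
  have hcluster : MapClusterPt (f y - y) l fun a ↦ f (u a) - u a :=
    hy.continuousAt_comp (f := fun z ↦ f z - z) (by fun_prop)
  exact sub_eq_zero.1 (eq_of_nhds_neBot (hcluster.clusterPt.mono hfu))

section ConditionalProbability

open scoped ProbabilityTheory

variable {Ω ι : Type*} [Fintype ι] {m mΩ : MeasurableSpace Ω} {μ : Measure Ω} {B : ι → Set Ω}

lemma ae_exists_mem_of_sum_condProb_eq_one [IsProbabilityMeasure μ] (hm : m ≤ mΩ)
    (hB : ∀ j, MeasurableSet (B j)) (hdisj : Pairwise (Function.onFun Disjoint B))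
    (hsum : ∀ᵐ ω ∂μ, ∑ j, (μ⟦B j | m⟧) ω = 1) : ∀ᵐ ω ∂μ, ∃ j, ω ∈ B j := by
  have hprob : μ.real (⋃ j, B j) = 1 := calc
    μ.real (⋃ j, B j) = ∑ j, μ.real (B j) := measureReal_iUnion_fintype hdisj hB
    _ = ∑ j, ∫ ω, (μ⟦B j | m⟧) ω ∂μ := by
      simp_rw [integral_condExp hm, integral_indicator_const (1 : ℝ) (hB _), smul_eq_mul, mul_one]
    _ = ∫ ω, ∑ j, (μ⟦B j | m⟧) ω ∂μ := (integral_finsetSum _ fun j _ ↦ integrable_condExp).symm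
    _ = 1 := by rw [integral_congr_ae hsum, integral_const, probReal_univ, one_smul]
  have hmem : ⋃ j, B j ∈ ae μ := (mem_ae_iff_prob_eq_one (.iUnion hB)).2 <| by
    simpa [measureReal_def, ENNReal.toReal_eq_one_iff] using hprob
  filter_upwards [hmem] with ω hω using Set.mem_iUnion.1 hω

lemma condExp_ae_eq_sum_condProb_smul {E : Type*} [NormedAddCommGroup E] [NormedSpace ℝ E]
    [CompleteSpace E] [IsFiniteMeasure μ] (hB : ∀ j, MeasurableSet (B j))
    (hdisj : Pairwise (Function.onFun Disjoint B)) (hcover : ∀ᵐ ω ∂μ, ∃ j, ω ∈ B j)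
    {Y : Ω → E} (hY : Integrable Y μ) {F : ι → Ω → E} (hF : ∀ j, StronglyMeasurable[m] (F j))
    (hYF : ∀ j, ∀ᵐ ω ∂μ, ω ∈ B j → Y ω = F j ω) :
    μ[Y | m] =ᵐ[μ] fun ω ↦ ∑ j, (μ⟦B j | m⟧) ω • F j ω := by
  have hpiece (j : ι) : (B j).indicator Y =ᵐ[μ] (B j).indicator (fun _ ↦ (1 : ℝ)) • F j := by
    filter_upwards [hYF j] with ω hω
    by_cases hωj : ω ∈ B j <;> simp [hωj, hω]
  have hint (j : ι) : Integrable ((B j).indicator (fun _ ↦ (1 : ℝ)) • F j) μ :=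
    (hY.indicator (hB j)).congr (hpiece j)
  have hdecomp : Y =ᵐ[μ] ∑ j, (B j).indicator (fun _ ↦ (1 : ℝ)) • F j := by
    filter_upwards [hcover, ae_all_iff.2 hpiece] with ω ⟨j, hj⟩ hpieces
    have hne (i : ι) (hij : i ≠ j) : ω ∉ B i := fun hi ↦ Set.disjoint_left.1 (hdisj hij) hi hj
    simp_rw [Finset.sum_apply, ← hpieces]
    rw [sum_eq_single_of_mem j (mem_univ j) fun i _ hij ↦ Set.indicator_of_notMem (hne i hij) _,
      Set.indicator_of_mem hj]
  have hpull (j : ι) : μ[(B j).indicator (fun _ ↦ (1 : ℝ)) • F j | m] =ᵐ[μ] (μ⟦B j | m⟧) • F j :=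
    condExp_smul_of_aestronglyMeasurable_right ((integrable_const _).indicator (hB j)) (hint j)
      (hF j).aestronglyMeasurable
  filter_upwards [condExp_congr_ae (m := m) hdecomp, condExp_finsetSum (fun j _ ↦ hint j) m,
    ae_all_iff.2 hpull] with ω hω hsum hpullω
  rw [hω, hsum, Finset.sum_apply]
  exact sum_congr rfl fun j _ ↦ hpullω j

end ConditionalProbability

section PosSemidef

variable {n 𝕜 : Type*} [RCLike 𝕜]

lemma isClosed_setOf_posSemidef [Finite n] : IsClosed {M : Matrix n n 𝕜 | M.PosSemidef} := by
  cases nonempty_fintype n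
  simp_rw [posSemidef_iff_dotProduct_mulVec, Set.ofPred_and, Set.ofPred_forall]
  refine .inter (isClosed_eq (by fun_prop) (by fun_prop)) (isClosed_iInter fun x ↦ ?_)
  exact isClosed_le continuous_const (by fun_prop)

variable [Fintype n]

open scoped MatrixOrder in
lemma exists_eq_conjTranspose_mul_self_of_posSemidef {M : Matrix n n 𝕜} (hM : M.PosSemidef) :
    ∃ B : Matrix n n 𝕜, M = Bᴴ * B := by
  classical exact CStarAlgebra.nonneg_iff_eq_star_mul_self.1 hM.nonneg

lemma norm_apply_le_norm_trace_of_posSemidef {M : Matrix n n 𝕜} (hM : M.PosSemidef)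
    (a b : n) : ‖M a b‖ ≤ ‖M.trace‖ := by
  obtain ⟨B, rfl⟩ := exists_eq_conjTranspose_mul_self_of_posSemidef hM
  have htrace : (Bᴴ * B).trace = ((∑ c, ∑ i, ‖B i c‖ ^ 2 : ℝ) : 𝕜) := by
    simp [Matrix.trace, Matrix.mul_apply, RCLike.conj_mul]
  have hcol (c : n) : ∑ i, ‖B i c‖ ^ 2 ≤ ‖(Bᴴ * B).trace‖ := by
    rw [htrace, RCLike.norm_of_nonneg (by positivity)]
    exact single_le_sum (f := fun c ↦ ∑ i, ‖B i c‖ ^ 2) (fun _ _ ↦ by positivity) (mem_univ c)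
  calc ‖(Bᴴ * B) a b‖ ≤ ∑ i, ‖B i a‖ * ‖B i b‖ := by
        rw [Matrix.mul_apply]
        exact norm_sum_le_of_le _ fun i _ ↦ by simp
    _ ≤ ∑ i, (‖B i a‖ ^ 2 + ‖B i b‖ ^ 2) / 2 :=
        sum_le_sum fun i _ ↦ by linarith [two_mul_le_add_sq ‖B i a‖ ‖B i b‖]
    _ ≤ ‖(Bᴴ * B).trace‖ := by
        rw [← sum_div, sum_add_distrib]
        linarith [hcol a, hcol b]

end PosSemidef

section Density

variable {k : ℕ}

lemma IsDensity.norm_apply_le_one {σ : Matrix (Fin k) (Fin k) ℂ} (hσ : IsDensity σ) (a b : Fin k) :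
    ‖σ a b‖ ≤ 1 := by
  simpa only [hσ.2, norm_one] using norm_apply_le_norm_trace_of_posSemidef hσ.1 a b

lemma isCompact_setOf_isDensity : IsCompact {σ : Matrix (Fin k) (Fin k) ℂ | IsDensity σ} := by
  have hbox : IsCompact (Set.univ.pi fun _ : Fin k ↦ Set.univ.pi fun _ : Fin k ↦
      Metric.closedBall (0 : ℂ) 1) :=
    isCompact_univ_pi fun _ ↦ isCompact_univ_pi fun _ ↦ isCompact_closedBall _ _
  refine hbox.of_isClosed_subset
    (isClosed_setOf_posSemidef.inter (isClosed_eq (by fun_prop) continuous_const)) ?_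
  exact fun σ hσ a _ b _ ↦ mem_closedBall_zero_iff.2 (hσ.norm_apply_le_one a b)

lemma convex_setOf_isDensity : Convex ℝ {σ : Matrix (Fin k) (Fin k) ℂ | IsDensity σ} := by
  intro σ hσ τ hτ s t hs ht hst
  refine ⟨(hσ.1.smul hs).add (hτ.1.smul ht), ?_⟩
  rw [trace_add, trace_smul, trace_smul, hσ.2, hτ.2, ← add_smul, hst, one_smul]

lemma tendsto_inv_smul_sub_zero_of_isDensity {σ : ℕ → Matrix (Fin k) (Fin k) ℂ}
    (hσ : ∀ n, IsDensity (σ n)) :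
    Tendsto (fun n : ℕ ↦ (n : ℝ)⁻¹ • (σ n - σ 0)) atTop (nhds 0) :=
  tendsto_pi_nhds.2 fun a ↦ tendsto_pi_nhds.2 fun b ↦ tendsto_inv_smul_zero_of_norm_le fun n ↦
    norm_sub_le_of_le ((hσ n).norm_apply_le_one a b) ((hσ 0).norm_apply_le_one a b)

end Density

section Measurement

variable {n ι : Type*} [Fintype n] [Fintype ι]

/-- The completely positive map `σ ↦ ∑ j, A j * σ * (A j)ᴴ` with Kraus operators `A j`, which is the
map `L` of the open quantum random walk. It is taken real-linear to commute with `cesaroMean`. -/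
def krausMap (A : ι → Matrix n n ℂ) :
    Matrix n n ℂ →ₗ[ℝ] Matrix n n ℂ where
  toFun σ := ∑ j, A j * σ * (A j)ᴴ
  map_add' σ τ := by simp_rw [mul_add, add_mul, sum_add_distrib]
  map_smul' c σ := by simp_rw [mul_smul_comm, smul_mul_assoc, smul_sum, RingHom.id_apply]

lemma continuous_krausMap (A : ι → Matrix n n ℂ) :
    Continuous (krausMap A) := by
  change Continuous fun σ ↦ ∑ j, A j * σ * (A j)ᴴ
  fun_prop

/-- The probability `Tr (B σ Bᴴ)` of the measurement outcome with Kraus operator `B` in the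
state `σ`. -/
def outcomeProb (B σ : Matrix n n ℂ) : ℝ := (B * σ * Bᴴ).trace.re

/-- The state `B σ Bᴴ / Tr (B σ Bᴴ)` after the measurement outcome with Kraus operator `B`; it
is `0` when that outcome has probability `0`. -/
def collapse (B σ : Matrix n n ℂ) : Matrix n n ℂ :=
  (B * σ * Bᴴ).trace⁻¹ • (B * σ * Bᴴ)

lemma sum_outcomeProb [DecidableEq n] {A : ι → Matrix n n ℂ}
    (hA : ∑ j, (A j)ᴴ * A j = 1) (σ : Matrix n n ℂ) :
    ∑ j, outcomeProb (A j) σ = σ.trace.re := by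
  simp_rw [outcomeProb, trace_mul_cycle (A _), ← Complex.re_sum, ← trace_sum, ← Matrix.sum_mul,
    hA, one_mul]

lemma outcomeProb_smul_collapse (B : Matrix n n ℂ) {σ : Matrix n n ℂ}
    (hσ : σ.PosSemidef) : outcomeProb B σ • collapse B σ = B * σ * Bᴴ := by
  have hpsd : (B * σ * Bᴴ).PosSemidef := hσ.mul_mul_conjTranspose_same B
  have hre : (outcomeProb B σ : ℂ) = (B * σ * Bᴴ).trace :=
    (Complex.eq_re_of_ofReal_le hpsd.trace_nonneg).symm
  rw [← Complex.coe_smul, hre, collapse]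
  by_cases htrace : (B * σ * Bᴴ).trace = 0
  · rw [htrace, zero_smul, hpsd.trace_eq_zero_iff.1 htrace]
  · exact smul_inv_smul₀ htrace _

instance {k : ℕ} : BorelSpace (Matrix (Fin k) (Fin k) ℂ) :=
  inferInstanceAs (BorelSpace (Fin k → Fin k → ℂ))

lemma measurable_collapse_apply {k : ℕ} (B : Matrix (Fin k) (Fin k) ℂ) (a b : Fin k) :
    Measurable fun σ ↦ collapse B σ a b := by
  have htrace : Continuous fun σ : Matrix (Fin k) (Fin k) ℂ ↦ (B * σ * Bᴴ).trace := by fun_prop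
  have hentry : Continuous fun σ : Matrix (Fin k) (Fin k) ℂ ↦ (B * σ * Bᴴ) a b :=
    Continuous.matrix_elem (by fun_prop) a b
  exact htrace.measurable.inv.mul hentry.measurable

end Measurement

section Drift

variable {k d : ℕ}

/-- The drift `mvec` as a linear function of the state. -/
def driftMap (A : Fin (2 * d) → Matrix (Fin k) (Fin k) ℂ) :
    Matrix (Fin k) (Fin k) ℂ →ₗ[ℝ] Fin d → ℝ where
  toFun := mvec A
  map_add' σ τ := by
    ext l
    simp [mvec, mul_add, add_mul, sum_add_distrib]
  map_smul' c σ := by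
    ext l
    simp [mvec, mul_sum, mul_assoc]

lemma mvec_eq_sum_outcomeProb_smul (A : Fin (2 * d) → Matrix (Fin k) (Fin k) ℂ)
    (σ : Matrix (Fin k) (Fin k) ℂ) : mvec A σ = ∑ j, outcomeProb (A j) σ • dirR d j := by
  ext l
  simp [mvec, outcomeProb, Finset.sum_apply]

lemma continuous_driftMap (A : Fin (2 * d) → Matrix (Fin k) (Fin k) ℂ) :
    Continuous (driftMap A) := by
  change Continuous fun σ l ↦ ∑ i, (A i * σ * (A i)ᴴ).trace.re * dirR d i l
  fun_prop

lemma dir_injective (d : ℕ) : Function.Injective (dir d) := by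
  intro i j hij
  ext
  by_cases hi : (i : ℕ) < d
  · have hcoord := congrFun hij ⟨i, hi⟩
    simp only [dir, hi, if_true] at hcoord
    split_ifs at hcoord <;> omega
  · have hcoord := congrFun hij ⟨i - d, by omega⟩
    simp only [dir, hi, if_true, if_false] at hcoord
    split_ifs at hcoord
    omega

lemma norm_dirR_le_one (j : Fin (2 * d)) : ‖dirR d j‖ ≤ 1 := by
  refine (pi_norm_le_iff_of_nonneg zero_le_one).2 fun l ↦ ?_
  simp only [dirR, dir]
  split_ifs <;> simp

end Drift

section Walk

variable {Ω : Type*} {d : ℕ}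

/-- The event that step `n` of the walk `X` goes in direction `j`. -/
def jumpEvent (X : ℕ → Ω → Fin d → ℤ) (n : ℕ) (j : Fin (2 * d)) : Set Ω :=
  {ω | X (n + 1) ω = X n ω + dir d j}

/-- The position of the walk `X` at time `n`, viewed in `ℝ^d`. -/
def position (X : ℕ → Ω → Fin d → ℤ) (n : ℕ) (ω : Ω) : Fin d → ℝ := fun l ↦ (X n ω l : ℝ)

lemma pairwise_disjoint_jumpEvent (X : ℕ → Ω → Fin d → ℤ) (n : ℕ) :
    Pairwise (Function.onFun Disjoint (jumpEvent X n)) := fun _ _ hij ↦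
  Set.disjoint_left.2 fun _ hi hj ↦ hij (dir_injective d (add_left_cancel (hi.symm.trans hj)))

lemma position_succ_sub_of_mem_jumpEvent {X : ℕ → Ω → Fin d → ℤ} {n : ℕ} {j : Fin (2 * d)} {ω : Ω}
    (hω : ω ∈ jumpEvent X n j) : position X (n + 1) ω - position X n ω = dirR d j := by
  ext l
  simp [position, dirR, show X (n + 1) ω = X n ω + dir d j from hω]

end Walk

namespace IsQTraj

open scoped ProbabilityTheory

variable {k d : ℕ} {Ω : Type} {mΩ : MeasurableSpace Ω} {μ : Measure Ω} {ℱ : Filtration ℕ mΩ}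
  {A : Fin (2 * d) → Matrix (Fin k) (Fin k) ℂ} {ρ : ℕ → Ω → Matrix (Fin k) (Fin k) ℂ}
  {X : ℕ → Ω → Fin d → ℤ}

lemma measurableSet_jumpEvent (hQT : IsQTraj A μ ℱ ρ X) (n : ℕ) (j : Fin (2 * d)) :
    MeasurableSet (jumpEvent X n j) :=
  measurableSet_eq_fun ((hQT.adapted_X (n + 1)).mono (ℱ.le _) le_rfl)
    (((hQT.adapted_X n).mono (ℱ.le _) le_rfl).add_const _)

lemma condProb_jumpEvent (hQT : IsQTraj A μ ℱ ρ X) (n : ℕ) (j : Fin (2 * d)) :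
    μ⟦jumpEvent X n j | ℱ n⟧ =ᵐ[μ] fun ω ↦ outcomeProb (A j) (ρ n ω) := by
  have hindicator : (jumpEvent X n j).indicator (fun _ ↦ (1 : ℝ)) =
      fun ω ↦ if X (n + 1) ω = X n ω + dir d j then 1 else 0 := by
    ext ω
    simp only [Set.indicator_apply, jumpEvent, Set.mem_ofPred_eq]
  rw [hindicator]
  exact hQT.prob n j

lemma ae_norm_state_apply_le_one (hQT : IsQTraj A μ ℱ ρ X) (n : ℕ) (a b : Fin k) :
    ∀ᵐ ω ∂μ, ‖ρ n ω a b‖ ≤ 1 := by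
  filter_upwards [hQT.density n] with ω hω using hω.norm_apply_le_one a b

lemma measurable_state_apply (hQT : IsQTraj A μ ℱ ρ X) (n : ℕ) (a b : Fin k) :
    Measurable[ℱ n] fun ω ↦ ρ n ω a b :=
  (measurable_pi_apply b).comp ((measurable_pi_apply a).comp (hQT.adapted_ρ n))

lemma measurable_position (hQT : IsQTraj A μ ℱ ρ X) (n : ℕ) : Measurable[ℱ n] (position X n) :=
  Measurable.comp (g := fun (x : Fin d → ℤ) l ↦ (x l : ℝ)) .of_discrete (hQT.adapted_X n)

lemma stronglyMeasurable_position_succ_sub (hQT : IsQTraj A μ ℱ ρ X) (n : ℕ) :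
    StronglyMeasurable[ℱ (n + 1)] fun ω ↦ position X (n + 1) ω - position X n ω :=
  ((hQT.measurable_position (n + 1)).sub
    ((hQT.measurable_position n).mono (ℱ.mono n.le_succ) le_rfl)).stronglyMeasurable

variable [IsProbabilityMeasure μ]

lemma ae_exists_mem_jumpEvent (hQT : IsQTraj A μ ℱ ρ X) (hA : ∑ j, (A j)ᴴ * A j = 1) (n : ℕ) :
    ∀ᵐ ω ∂μ, ∃ j, ω ∈ jumpEvent X n j := by
  refine ae_exists_mem_of_sum_condProb_eq_one (ℱ.le n) (hQT.measurableSet_jumpEvent n)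
    (pairwise_disjoint_jumpEvent X n) ?_
  filter_upwards [ae_all_iff.2 (hQT.condProb_jumpEvent n), hQT.density n] with ω hprob hdensity
  simp_rw [hprob, sum_outcomeProb hA, hdensity.2, Complex.one_re]

lemma ae_norm_position_succ_sub_le_one (hQT : IsQTraj A μ ℱ ρ X) (hA : ∑ j, (A j)ᴴ * A j = 1)
    (n : ℕ) : ∀ᵐ ω ∂μ, ‖position X (n + 1) ω - position X n ω‖ ≤ 1 := by
  filter_upwards [hQT.ae_exists_mem_jumpEvent hA n] with ω ⟨j, hj⟩
  rw [position_succ_sub_of_mem_jumpEvent hj]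
  exact norm_dirR_le_one j

lemma condExp_of_eq_on_jumpEvent {E : Type*} [NormedAddCommGroup E] [NormedSpace ℝ E]
    [CompleteSpace E] (hQT : IsQTraj A μ ℱ ρ X) (hA : ∑ j, (A j)ᴴ * A j = 1) (n : ℕ) {Y : Ω → E}
    (hY : Integrable Y μ) {F : Fin (2 * d) → Ω → E} (hF : ∀ j, StronglyMeasurable[ℱ n] (F j))
    (hYF : ∀ j, ∀ᵐ ω ∂μ, ω ∈ jumpEvent X n j → Y ω = F j ω) :
    μ[Y | ℱ n] =ᵐ[μ] fun ω ↦ ∑ j, outcomeProb (A j) (ρ n ω) • F j ω := by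
  filter_upwards [condExp_ae_eq_sum_condProb_smul (hQT.measurableSet_jumpEvent n)
    (pairwise_disjoint_jumpEvent X n) (hQT.ae_exists_mem_jumpEvent hA n) hY hF hYF,
    ae_all_iff.2 (hQT.condProb_jumpEvent n)] with ω hω hprob
  simp_rw [hω, hprob]

lemma condExp_state_apply (hQT : IsQTraj A μ ℱ ρ X) (hA : ∑ j, (A j)ᴴ * A j = 1) (n : ℕ)
    (a b : Fin k) :
    μ[fun ω ↦ ρ (n + 1) ω a b | ℱ n] =ᵐ[μ] fun ω ↦ krausMap A (ρ n ω) a b := by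
  have hint : Integrable (fun ω ↦ ρ (n + 1) ω a b) μ :=
    .of_bound ((hQT.measurable_state_apply (n + 1) a b).mono (ℱ.le _) le_rfl).aestronglyMeasurable
      1 (hQT.ae_norm_state_apply_le_one (n + 1) a b)
  have hcollapse (j : Fin (2 * d)) : StronglyMeasurable[ℱ n] fun ω ↦ collapse (A j) (ρ n ω) a b :=
    ((measurable_collapse_apply (A j) a b).comp (hQT.adapted_ρ n)).stronglyMeasurable
  have hupdate (j : Fin (2 * d)) : ∀ᵐ ω ∂μ, ω ∈ jumpEvent X n j →
      ρ (n + 1) ω a b = collapse (A j) (ρ n ω) a b := by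
    filter_upwards [hQT.update n j] with ω hω hj using congrFun₂ (hω hj) a b
  filter_upwards [hQT.condExp_of_eq_on_jumpEvent hA n hint hcollapse hupdate, hQT.density n]
    with ω hω hdensity
  calc μ[fun ω ↦ ρ (n + 1) ω a b | ℱ n] ω
      = ∑ j, (outcomeProb (A j) (ρ n ω) • collapse (A j) (ρ n ω)) a b := hω
    _ = ∑ j, (A j * ρ n ω * (A j)ᴴ) a b := by simp_rw [outcomeProb_smul_collapse _ hdensity.1]
    _ = krausMap A (ρ n ω) a b := (Matrix.sum_apply a b univ _).symm

lemma condExp_position_succ_sub (hQT : IsQTraj A μ ℱ ρ X) (hA : ∑ j, (A j)ᴴ * A j = 1) (n : ℕ) :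
    μ[fun ω ↦ position X (n + 1) ω - position X n ω | ℱ n] =ᵐ[μ]
      fun ω ↦ driftMap A (ρ n ω) := by
  have hint : Integrable (fun ω ↦ position X (n + 1) ω - position X n ω) μ :=
    .of_bound ((hQT.stronglyMeasurable_position_succ_sub n).mono (ℱ.le _)).aestronglyMeasurable
      1 (hQT.ae_norm_position_succ_sub_le_one hA n)
  filter_upwards [hQT.condExp_of_eq_on_jumpEvent hA n hint (F := fun j _ ↦ dirR d j)
    (fun j ↦ stronglyMeasurable_const)
    fun j ↦ ae_of_all _ fun ω hj ↦ position_succ_sub_of_mem_jumpEvent hj] with ω hω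
  exact hω.trans (mvec_eq_sum_outcomeProb_smul A (ρ n ω)).symm

lemma ae_tendsto_cesaroMean_state_succ_sub_krausMap (hQT : IsQTraj A μ ℱ ρ X)
    (hA : ∑ j, (A j)ᴴ * A j = 1) :
    ∀ᵐ ω ∂μ, Tendsto (cesaroMean fun n ↦ ρ (n + 1) ω - krausMap A (ρ n ω)) atTop (nhds 0) := by
  have hentry (a b : Fin k) : ∀ᵐ ω ∂μ,
      Tendsto (cesaroMean fun n ↦ ρ (n + 1) ω a b - krausMap A (ρ n ω) a b) atTop (nhds 0) := by
    filter_upwards [ae_tendsto_cesaroMean_sub_condExp_of_norm_le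
      (fun n ↦ (hQT.measurable_state_apply (n + 1) a b).stronglyMeasurable)
      (fun n ↦ hQT.ae_norm_state_apply_le_one (n + 1) a b),
      ae_all_iff.2 fun n ↦ hQT.condExp_state_apply hA n a b] with ω hω hcond
    simpa only [hcond] using hω
  filter_upwards [ae_all_iff.2 fun a ↦ ae_all_iff.2 (hentry a)] with ω hω
  refine tendsto_pi_nhds.2 fun a ↦ tendsto_pi_nhds.2 fun b ↦ (hω a b).congr fun n ↦ ?_
  exact (map_cesaroMean (Matrix.entryLinearMap ℝ ℂ a b)
    (fun i ↦ ρ (i + 1) ω - krausMap A (ρ i ω)) n).symm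

lemma ae_tendsto_cesaroMean_position_succ_sub_driftMap (hQT : IsQTraj A μ ℱ ρ X)
    (hA : ∑ j, (A j)ᴴ * A j = 1) :
    ∀ᵐ ω ∂μ, Tendsto (cesaroMean fun n ↦
      position X (n + 1) ω - position X n ω - driftMap A (ρ n ω)) atTop (nhds 0) := by
  filter_upwards [ae_tendsto_cesaroMean_sub_condExp_of_norm_le
    hQT.stronglyMeasurable_position_succ_sub (hQT.ae_norm_position_succ_sub_le_one hA),
    ae_all_iff.2 (hQT.condExp_position_succ_sub hA)] with ω hω hcond
  simpa only [hcond] using hω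

theorem ae_tendsto_cesaroMean_state (hQT : IsQTraj A μ ℱ ρ X) (hA : ∑ j, (A j)ᴴ * A j = 1)
    {ρinf : Matrix (Fin k) (Fin k) ℂ}
    (huniq : ∀ σ, IsDensity σ → krausMap A σ = σ → σ = ρinf) :
    ∀ᵐ ω ∂μ, Tendsto (cesaroMean fun n ↦ ρ n ω) atTop (nhds ρinf) := by
  filter_upwards [ae_all_iff.2 hQT.density,
    hQT.ae_tendsto_cesaroMean_state_succ_sub_krausMap hA] with ω hdensity hω
  have hmem : ∀ᶠ n in atTop, cesaroMean (fun n ↦ ρ n ω) n ∈ {σ | IsDensity σ} := by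
    filter_upwards [eventually_ne_atTop 0] with n hn
    exact cesaroMean_mem_of_convex convex_setOf_isDensity hdensity hn
  have hfixed : Tendsto (fun n ↦ krausMap A (cesaroMean (fun n ↦ ρ n ω) n) -
      cesaroMean (fun n ↦ ρ n ω) n) atTop (nhds 0) :=
    tendsto_map_cesaroMean_sub _ (tendsto_inv_smul_sub_zero_of_isDensity hdensity) hω
  exact tendsto_nhds_of_isCompact_of_unique_fixedPoint isCompact_setOf_isDensity hmem
    (continuous_krausMap A) hfixed huniq

end IsQTraj

/-- (Law of large numbers.) Under (H1), `X_n / n → m` almost surely. -/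
theorem stmt7 {k d : ℕ} (hd : 1 ≤ d)
    (A : Fin (2 * d) → Matrix (Fin k) (Fin k) ℂ)
    (hA : ∑ j, (A j)ᴴ * A j = 1)
    (ρinf : Matrix (Fin k) (Fin k) ℂ) (hρinf : IsDensity ρinf)
    (hinv : (∑ j, A j * ρinf * (A j)ᴴ) = ρinf)
    (huniq : ∀ σ, IsDensity σ → (∑ j, A j * σ * (A j)ᴴ) = σ → σ = ρinf)
    {Ω : Type} {mΩ : MeasurableSpace Ω} (μ : Measure Ω) [IsProbabilityMeasure μ]
    (ℱ : Filtration ℕ mΩ)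
    (ρ : ℕ → Ω → Matrix (Fin k) (Fin k) ℂ) (X : ℕ → Ω → Fin d → ℤ)
    (hQT : IsQTraj A μ ℱ ρ X) :
    ∀ᵐ ω ∂μ,
      Tendsto (fun n : ℕ => fun j => (X n ω j : ℝ) / n) atTop (nhds (mvec A ρinf)) := by
  filter_upwards [hQT.ae_tendsto_cesaroMean_state hA huniq,
    hQT.ae_tendsto_cesaroMean_position_succ_sub_driftMap hA] with ω hstate hstep
  have hdrift : Tendsto (fun n ↦ driftMap A (cesaroMean (fun i ↦ ρ i ω) n)) atTop
      (nhds (mvec A ρinf)) := ((continuous_driftMap A).tendsto ρinf).comp hstate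
  have hinit : Tendsto (fun n : ℕ ↦ (n : ℝ)⁻¹ • position X 0 ω) atTop (nhds 0) :=
    tendsto_inv_smul_zero_of_norm_le fun _ ↦ le_rfl
  have hsum := (hinit.add hstep).add hdrift
  rw [add_zero, zero_add] at hsum
  refine hsum.congr fun n ↦ ?_
  calc (n : ℝ)⁻¹ • position X 0 ω +
        cesaroMean (fun i ↦ position X (i + 1) ω - position X i ω - driftMap A (ρ i ω)) n +
        driftMap A (cesaroMean (fun i ↦ ρ i ω) n)
      = (n : ℝ)⁻¹ • position X n ω := by
        rw [cesaroMean_sub, cesaroMean_succ_sub fun i ↦ position X i ω, map_cesaroMean, smul_sub]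
        abel
    _ = fun j ↦ (X n ω j : ℝ) / n := funext fun j ↦ inv_mul_eq_div _ _
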